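/- For all constants 0 < δ ≤ Δ there exists C > 0 such that: for every integer k ≥ 3 and every Alice value density v_A there is a deterministic Alice strategy for the repeated k-cut game with the property that for every Bob value density v_B and every horizon T ≥ 2, Alice's Stackelberg regret against the myopic Bob over horizon T is at most C·√(T·k)·log(T·k). -/

import Mathlib

open MeasureTheory Set

noncomputable section

attribute [local instance] Classical.propDecidable

/-- A value density: measurable, bounded in `[δ, Δ]` on `[0,1]`, integrating to 1 on `[0,1]`. -/
def IsValueDensity (δ Δ : ℝ) (v : ℝ → ℝ) : Prop :=
  Measurable v ∧ (∀ x ∈ Set.Icc (0:ℝ) 1, v x ∈ Set.Icc δ Δ) ∧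
    (∫ x in Set.Icc (0:ℝ) 1, v x) = 1

/-- The value of a piece `S` under density `v`. -/
def pieceVal (v : ℝ → ℝ) (S : Set ℝ) : ℝ := ∫ x in S, v x

/-- Extended cut points: `0, c 0, …, c (k-1), 1`. -/
def extCuts (k : ℕ) (c : Fin k → ℝ) : ℕ → ℝ := fun i =>
  if i = 0 then 0 else if h : i - 1 < k then c ⟨i - 1, h⟩ else 1

/-- A valid vector of `k` cut points: nondecreasing, within `[0,1]`. -/
def ValidCuts (k : ℕ) (c : Fin k → ℝ) : Prop :=
  Monotone c ∧ ∀ i, c i ∈ Set.Icc (0:ℝ) 1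

/-- The two pieces of the alternating partition induced by cuts `c`:
`true` gives the union of even-indexed intervals, `false` the odd-indexed ones. -/
def altPiece (k : ℕ) (c : Fin k → ℝ) (b : Bool) : Set ℝ :=
  ⋃ i ∈ Finset.range (k + 1),
    if decide (i % 2 = 0) = b then Set.Icc (extCuts k c i) (extCuts k c (i + 1)) else ∅

/-- Alice's Stackelberg value with `k` cuts: max of `V_A(Z_A)` over alternating partitions
`(Z_A, Z_B)` induced by `k` cut points with `V_B(Z_B) ≥ 1/2`. -/
def stackelbergValue (k : ℕ) (vA vB : ℝ → ℝ) : ℝ :=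
  sSup { u : ℝ | ∃ (c : Fin k → ℝ) (b : Bool), ValidCuts k c ∧
    1 / 2 ≤ pieceVal vB (altPiece k c (!b)) ∧ u = pieceVal vA (altPiece k c b) }

/-- A history of play: the list of (Alice's cuts, Bob's choice) in past rounds. -/
abbrev Hist (k : ℕ) := List ((Fin k → ℝ) × Bool)

/-- Alice's deterministic strategy: horizon and history ↦ next cut vector. -/
abbrev AliceStrategy (k : ℕ) := ℕ → Hist k → (Fin k → ℝ)

/-- Bob's deterministic strategy: horizon, history, and Alice's current cuts ↦ choice. -/
abbrev BobStrategy (k : ℕ) := ℕ → Hist k → (Fin k → ℝ) → Bool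

/-- The history of play after `t` rounds. -/
def playHist (k : ℕ) (SA : AliceStrategy k) (SB : BobStrategy k) (T : ℕ) : ℕ → Hist k
  | 0 => []
  | t + 1 =>
      let h := playHist k SA SB T t
      let cuts := SA T h
      h ++ [(cuts, SB T h cuts)]

/-- Alice's cuts in round `t` (0-indexed). -/
def roundCuts (k : ℕ) (SA : AliceStrategy k) (SB : BobStrategy k) (T t : ℕ) : Fin k → ℝ :=
  SA T (playHist k SA SB T t)

/-- Bob's choice in round `t` (0-indexed). -/
def roundChoice (k : ℕ) (SA : AliceStrategy k) (SB : BobStrategy k) (T t : ℕ) : Bool :=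
  SB T (playHist k SA SB T t) (roundCuts k SA SB T t)

/-- Alice's Stackelberg regret over horizon `T`: in each round she receives the value of
the piece Bob did not choose. -/
def aliceRegret (k : ℕ) (vA vB : ℝ → ℝ) (SA : AliceStrategy k) (SB : BobStrategy k)
    (T : ℕ) : ℝ :=
  ∑ t ∈ Finset.range T,
    (stackelbergValue k vA vB -
      pieceVal vA (altPiece k (roundCuts k SA SB T t) (!(roundChoice k SA SB T t))))

/-- Bob's regret over horizon `T` relative to always choosing his preferred piece. -/
def bobRegret (k : ℕ) (vB : ℝ → ℝ) (SA : AliceStrategy k) (SB : BobStrategy k) (T : ℕ) : ℝ :=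
  ∑ t ∈ Finset.range T,
    (max (pieceVal vB (altPiece k (roundCuts k SA SB T t) true))
        (pieceVal vB (altPiece k (roundCuts k SA SB T t) false)) -
      pieceVal vB (altPiece k (roundCuts k SA SB T t) (roundChoice k SA SB T t)))

/-- Bob's strategy guarantees regret at most `R T` against every Alice strategy and horizon. -/
def BobGuarantees (k : ℕ) (vB : ℝ → ℝ) (SB : BobStrategy k) (R : ℕ → ℝ) : Prop :=
  ∀ (SA : AliceStrategy k) (T : ℕ), bobRegret k vB SA SB T ≤ R T

/-- The myopic Bob: chooses the piece of larger `V_B`-value, breaking ties towards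
the piece of smaller `V_A`-value. -/
def myopicBob (k : ℕ) (vA vB : ℝ → ℝ) : BobStrategy k := fun _ _ c =>
  if pieceVal vB (altPiece k c false) < pieceVal vB (altPiece k c true) then true
  else if pieceVal vB (altPiece k c true) < pieceVal vB (altPiece k c false) then false
  else if pieceVal vA (altPiece k c true) ≤ pieceVal vA (altPiece k c false) then true
  else false

/-- Alice's strategy always produces valid cut vectors. -/
def AliceValid (k : ℕ) (SA : AliceStrategy k) : Prop := ∀ T h, ValidCuts k (SA T h)

/-!
Write `F` for the cumulative value of Bob's density. A question with cuts `a ≤ y ≤ s` tells Alice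
whether `F a + (F s - F y) ≥ 1 / 2`, so with `L` questions of binary search she finds, up to an
error of order `2⁻ᴸ` in value, the `s` for which `[y, s]` completes `[0, a]` to half of the cake.
With `a = y = 0` this is Bob's midpoint `m`. With `a = m - η` it is a step to the right of the
unknown, but always equal, value `u = 1 / 2 - F (m - η)`; marching from `m` to the end of the cake
reveals `u` through the number of steps, and hence `F` on `[m, 1]` up to `O(η)`. Finally the
partners at distance `1 / 2` of the points of a grid of mesh `η` carry this knowledge over to
`[0, m]`.

All of this takes `O(L / η)` rounds. Afterwards Alice knows the value of every piece up to `O(k η)`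
and plays cuts that are almost optimal and leave Bob a strict preference, at a loss of `O(k η)` per
round. The choice `η ≈ 1 / √(T k)`, `L ≈ log (T k)` balances the two costs.
-/

section CumulativeValue

variable {δ Δ : ℝ} {v F : ℝ → ℝ} {x y : ℝ}

namespace IsValueDensity

theorem integrableOn (hv : IsValueDensity δ Δ v) : IntegrableOn v (Icc 0 1) := by
  refine Measure.integrableOn_of_bounded (M := max |δ| |Δ|) (by simp) hv.1.aestronglyMeasurable ?_
  refine ae_restrict_of_forall_mem measurableSet_Icc fun x hx => ?_
  exact abs_le_max_abs_abs (hv.2.1 x hx).1 (hv.2.1 x hx).2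

theorem intervalIntegrable (hv : IsValueDensity δ Δ v) (hx : x ∈ Icc (0 : ℝ) 1)
    (hy : y ∈ Icc (0 : ℝ) 1) : IntervalIntegrable v volume x y := by
  rw [intervalIntegrable_iff']
  exact hv.integrableOn.mono_set (uIcc_subset_Icc hx hy)

end IsValueDensity

/-- The cumulative value `V([0, x])` of the density `v`. -/
def cumVal (v : ℝ → ℝ) (x : ℝ) : ℝ := ∫ t in (0 : ℝ)..x, v t

theorem cumVal_sub (hv : IsValueDensity δ Δ v) (hx : x ∈ Icc (0 : ℝ) 1) (hy : y ∈ Icc (0 : ℝ) 1)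
    (hxy : x ≤ y) : cumVal v y - cumVal v x = ∫ t in Icc x y, v t := by
  rw [cumVal, cumVal, intervalIntegral.integral_interval_sub_left
    (hv.intervalIntegrable (by simp) hy) (hv.intervalIntegrable (by simp) hx),
    intervalIntegral.integral_of_le hxy, integral_Icc_eq_integral_Ioc]

/-- `F` behaves on `[0, 1]` like the cumulative value of a density with values in `[δ, Δ]`. -/
structure IsCumulative (δ Δ : ℝ) (F : ℝ → ℝ) : Prop where
  map_zero : F 0 = 0
  map_one : F 1 = 1
  mul_sub_le : ∀ ⦃x y⦄, x ∈ Icc (0 : ℝ) 1 → y ∈ Icc (0 : ℝ) 1 → x ≤ y → δ * (y - x) ≤ F y - F x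
  sub_le_mul : ∀ ⦃x y⦄, x ∈ Icc (0 : ℝ) 1 → y ∈ Icc (0 : ℝ) 1 → x ≤ y → F y - F x ≤ Δ * (y - x)

theorem IsValueDensity.isCumulative (hv : IsValueDensity δ Δ v) :
    IsCumulative δ Δ (cumVal v) where
  map_zero := by simp [cumVal]
  map_one := by
    have h := cumVal_sub hv (by simp) (by simp) zero_le_one
    simpa [cumVal, hv.2.2] using h
  mul_sub_le x y hx hy hxy := by
    have hsub : Icc x y ⊆ Icc (0 : ℝ) 1 := Icc_subset_Icc hx.1 hy.2
    have h := setIntegral_mono_on (integrableOn_const (by simp)) (hv.integrableOn.mono_set hsub)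
      measurableSet_Icc fun t ht => (hv.2.1 t (hsub ht)).1
    rw [cumVal_sub hv hx hy hxy]
    simpa [hxy, mul_comm] using h
  sub_le_mul x y hx hy hxy := by
    have hsub : Icc x y ⊆ Icc (0 : ℝ) 1 := Icc_subset_Icc hx.1 hy.2
    have h := setIntegral_mono_on (hv.integrableOn.mono_set hsub) (integrableOn_const (by simp))
      measurableSet_Icc fun t ht => (hv.2.1 t (hsub ht)).2
    rw [cumVal_sub hv hx hy hxy]
    simpa [hxy, mul_comm] using h

namespace IsCumulative

theorem monotoneOn (hF : IsCumulative δ Δ F) (hδ : 0 ≤ δ) : MonotoneOn F (Icc 0 1) :=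
  fun _ hx _ hy hxy =>
    sub_nonneg.1 ((mul_nonneg hδ (sub_nonneg.2 hxy)).trans (hF.mul_sub_le hx hy hxy))

theorem mem_Icc (hF : IsCumulative δ Δ F) (hδ : 0 ≤ δ) (hx : x ∈ Icc (0 : ℝ) 1) :
    F x ∈ Icc (0 : ℝ) 1 :=
  ⟨hF.map_zero.symm.trans_le (hF.monotoneOn hδ (by simp) hx hx.1),
    (hF.monotoneOn hδ hx (by simp) hx.2).trans_eq hF.map_one⟩

theorem abs_sub_le (hF : IsCumulative δ Δ F) (hδ : 0 ≤ δ) (hx : x ∈ Icc (0 : ℝ) 1)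
    (hy : y ∈ Icc (0 : ℝ) 1) : |F x - F y| ≤ Δ * |x - y| := by
  wlog hxy : y ≤ x generalizing x y
  · rw [abs_sub_comm, abs_sub_comm x]
    exact this hy hx (le_of_not_ge hxy)
  rw [abs_of_nonneg (sub_nonneg.2 (hF.monotoneOn hδ hy hx hxy)), abs_of_nonneg (sub_nonneg.2 hxy)]
  exact hF.sub_le_mul hy hx hxy

theorem continuousOn (hF : IsCumulative δ Δ F) (hδ : 0 ≤ δ) : ContinuousOn F (Icc 0 1) :=
  (LipschitzOnWith.of_dist_le' fun _ hx _ hy => hF.abs_sub_le hδ hx hy).continuousOn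

theorem lower_le_one (hF : IsCumulative δ Δ F) : δ ≤ 1 := by
  simpa [hF.map_zero, hF.map_one] using
    hF.mul_sub_le (x := 0) (y := 1) (by simp) (by simp) zero_le_one

theorem one_le_upper (hF : IsCumulative δ Δ F) : 1 ≤ Δ := by
  simpa [hF.map_zero, hF.map_one] using
    hF.sub_le_mul (x := 0) (y := 1) (by simp) (by simp) zero_le_one

theorem upper_le_div (hF : IsCumulative δ Δ F) (hδ : 0 < δ) : Δ ≤ Δ / δ :=
  le_div_self (zero_le_one.trans hF.one_le_upper) hδ hF.lower_le_one

theorem one_le_div (hF : IsCumulative δ Δ F) (hδ : 0 < δ) : 1 ≤ Δ / δ :=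
  hF.one_le_upper.trans (hF.upper_le_div hδ)

theorem one_sub_le_of_one_sub_le {G : ℝ → ℝ} {β : ℝ} (hF : IsCumulative δ Δ F) (hδ : 0 < δ)
    (hG : IsCumulative δ Δ G) (hx : x ∈ Icc (0 : ℝ) 1) (hβ : 1 - β ≤ F x) :
    1 - Δ / δ * β ≤ G x := by
  have hΔ : 0 ≤ Δ := zero_le_one.trans hF.one_le_upper
  have hlength : 1 - x ≤ β / δ := by
    have h := hF.mul_sub_le hx (y := 1) (by simp) hx.2
    rw [hF.map_one] at h
    exact (le_div_iff₀' hδ).2 (by linarith)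
  have h := hG.sub_le_mul hx (y := 1) (by simp) hx.2
  rw [hG.map_one, sub_le_comm] at h
  refine le_trans ?_ h
  rw [div_mul_comm, mul_comm]
  gcongr

end IsCumulative

end CumulativeValue

section AlternatingPartition

variable {δ Δ : ℝ} {k : ℕ} {c : Fin k → ℝ} {v w : ℝ → ℝ}

theorem extCuts_zero (k : ℕ) (c : Fin k → ℝ) : extCuts k c 0 = 0 := by simp [extCuts]

theorem extCuts_succ (c : Fin k → ℝ) (i : ℕ) :
    extCuts k c (i + 1) = if h : i < k then c ⟨i, h⟩ else 1 := by simp [extCuts]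

theorem extCuts_last (k : ℕ) (c : Fin k → ℝ) : extCuts k c (k + 1) = 1 := by simp [extCuts]

theorem ValidCuts.extCuts_mem (hc : ValidCuts k c) (i : ℕ) : extCuts k c i ∈ Icc (0 : ℝ) 1 := by
  unfold extCuts
  split_ifs
  exacts [by simp, hc.2 _, by simp]

theorem ValidCuts.extCuts_monotone (hc : ValidCuts k c) : Monotone (extCuts k c) := by
  refine monotone_nat_of_le_succ fun i => ?_
  cases i with
  | zero => exact (extCuts_zero k c).trans_le (hc.extCuts_mem 1).1
  | succ i =>
    by_cases hi : i + 1 < k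
    · rw [extCuts_succ, extCuts_succ, dif_pos hi, dif_pos (Nat.lt_of_succ_lt hi)]
      exact hc.1 (Nat.le_succ i)
    · rw [extCuts_succ c (i + 1), dif_neg hi]
      exact (hc.extCuts_mem _).2

/-- The indices `i` of the intervals `[x_i, x_{i+1}]` that make up the piece labelled `b`. -/
def pieceIndices (k : ℕ) (b : Bool) : Finset ℕ :=
  {i ∈ Finset.range (k + 1) | decide (i % 2 = 0) = b}

/-- The total increment of `F` over the intervals of piece `b` cut out by `X`; for a cumulative
value `F` this is the value of the piece. -/
def altSum (k : ℕ) (F : ℝ → ℝ) (X : ℕ → ℝ) (b : Bool) : ℝ :=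
  ∑ i ∈ pieceIndices k b, (F (X (i + 1)) - F (X i))

theorem altSum_add_altSum_not (k : ℕ) (F : ℝ → ℝ) (X : ℕ → ℝ) (b : Bool) :
    altSum k F X b + altSum k F X (!b) = F (X (k + 1)) - F (X 0) := by
  have hnot : pieceIndices k (!b) = {i ∈ Finset.range (k + 1) | ¬decide (i % 2 = 0) = b} :=
    Finset.filter_congr fun i _ => by cases b <;> simp
  rw [altSum, altSum, hnot, pieceIndices, Finset.sum_filter_add_sum_filter_not,
    Finset.sum_range_sub fun i => F (X i)]

theorem altPiece_eq_biUnion (k : ℕ) (c : Fin k → ℝ) (b : Bool) :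
    altPiece k c b = ⋃ i ∈ pieceIndices k b, Icc (extCuts k c i) (extCuts k c (i + 1)) := by
  simp only [altPiece, pieceIndices, Finset.mem_filter, iUnion_and]
  exact iUnion₂_congr fun i _ => by split_ifs <;> simp [*]

theorem measurableSet_altPiece (k : ℕ) (c : Fin k → ℝ) (b : Bool) :
    MeasurableSet (altPiece k c b) := by
  rw [altPiece_eq_biUnion]
  exact Finset.measurableSet_biUnion _ fun _ _ => measurableSet_Icc

theorem ValidCuts.altPiece_subset (hc : ValidCuts k c) (b : Bool) :
    altPiece k c b ⊆ Icc 0 1 := by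
  rw [altPiece_eq_biUnion]
  exact iUnion₂_subset fun i _ => Icc_subset_Icc (hc.extCuts_mem i).1 (hc.extCuts_mem (i + 1)).2

theorem pieceVal_altPiece (hv : IsValueDensity δ Δ v) (hc : ValidCuts k c) (b : Bool) :
    pieceVal v (altPiece k c b) = altSum k (cumVal v) (extCuts k c) b := by
  set X := extCuts k c
  -- Neighbouring closed intervals share an endpoint, so additivity needs the half-open ones.
  have hIoc : (⋃ i ∈ pieceIndices k b, Icc (X i) (X (i + 1)) : Set ℝ) =ᵐ[volume]
      ⋃ i ∈ pieceIndices k b, Ioc (X i) (X (i + 1)) :=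
    Finset.eventuallyEq_iUnion _ fun i _ => Ioc_ae_eq_Icc.symm
  have hdisj : (pieceIndices k b : Set ℕ).Pairwise
      (Function.onFun Disjoint fun i => Ioc (X i) (X (i + 1))) :=
    fun i _ j _ hij => hc.extCuts_monotone.pairwise_disjoint_on_Ioc_succ hij
  have hint : ∀ i ∈ pieceIndices k b, IntegrableOn v (Ioc (X i) (X (i + 1))) := fun i _ =>
    hv.integrableOn.mono_set <| Ioc_subset_Icc_self.trans <|
      Icc_subset_Icc (hc.extCuts_mem i).1 (hc.extCuts_mem (i + 1)).2
  rw [pieceVal, altPiece_eq_biUnion, setIntegral_congr_set hIoc,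
    integral_biUnion_finset _ (fun _ _ => measurableSet_Ioc) hdisj hint, altSum]
  refine Finset.sum_congr rfl fun i _ => ?_
  rw [← integral_Icc_eq_integral_Ioc, cumVal_sub hv (hc.extCuts_mem i) (hc.extCuts_mem (i + 1))
    (hc.extCuts_monotone i.le_succ)]

theorem pieceVal_add_pieceVal_not (hv : IsValueDensity δ Δ v) (hc : ValidCuts k c) (b : Bool) :
    pieceVal v (altPiece k c b) + pieceVal v (altPiece k c (!b)) = 1 := by
  rw [pieceVal_altPiece hv hc, pieceVal_altPiece hv hc, altSum_add_altSum_not, extCuts_zero,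
    extCuts_last, hv.isCumulative.map_zero, hv.isCumulative.map_one, sub_zero]

theorem pieceVal_nonneg (hv : IsValueDensity δ Δ v) (hδ : 0 ≤ δ) (hc : ValidCuts k c) (b : Bool) :
    0 ≤ pieceVal v (altPiece k c b) :=
  setIntegral_nonneg (measurableSet_altPiece k c b) fun x hx =>
    hδ.trans (hv.2.1 x (hc.altPiece_subset b hx)).1

theorem pieceVal_le_one (hv : IsValueDensity δ Δ v) (hδ : 0 ≤ δ) (hc : ValidCuts k c) (b : Bool) :
    pieceVal v (altPiece k c b) ≤ 1 :=
  pieceVal_add_pieceVal_not hv hc b ▸ le_add_of_nonneg_right (pieceVal_nonneg hv hδ hc !b)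

theorem abs_pieceVal_sub_le {κ : ℝ} (hv : IsValueDensity δ Δ v) (hw : IsValueDensity δ Δ w)
    (hκ : ∀ x ∈ Icc (0 : ℝ) 1, |cumVal v x - cumVal w x| ≤ κ) (hc : ValidCuts k c) (b : Bool) :
    |pieceVal v (altPiece k c b) - pieceVal w (altPiece k c b)| ≤ (k + 1) * (2 * κ) := by
  set X := extCuts k c
  have hκ0 : 0 ≤ κ := (abs_nonneg _).trans (hκ 0 (by simp))
  have hcard : ((pieceIndices k b).card : ℝ) ≤ k + 1 := by
    exact_mod_cast (Finset.card_filter_le _ _).trans_eq (Finset.card_range (k + 1))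
  rw [pieceVal_altPiece hv hc, pieceVal_altPiece hw hc, altSum, altSum, ← Finset.sum_sub_distrib]
  calc |∑ i ∈ pieceIndices k b, (cumVal v (X (i + 1)) - cumVal v (X i) -
          (cumVal w (X (i + 1)) - cumVal w (X i)))|
      ≤ ∑ _i ∈ pieceIndices k b, 2 * κ := by
        refine (Finset.abs_sum_le_sum_abs _ _).trans (Finset.sum_le_sum fun i _ => ?_)
        rw [sub_sub_sub_comm, two_mul]
        exact (abs_sub _ _).trans
          (add_le_add (hκ _ (hc.extCuts_mem (i + 1))) (hκ _ (hc.extCuts_mem i)))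
    _ = (pieceIndices k b).card * (2 * κ) := by rw [Finset.sum_const, nsmul_eq_mul]
    _ ≤ (k + 1) * (2 * κ) := by gcongr

end AlternatingPartition

section Clipping

variable {δ Δ t : ℝ} {k : ℕ} {b : Bool} {c : Fin k → ℝ} {w F : ℝ → ℝ}

/-- The cuts `c` moved so that piece `b` is cut back to `[t, 1]`, the rest of `[0, t]` going to the
other piece. When `b = true` the first interval belongs to piece `b` and is cut back from the right,
to `[0, 1 - t]`, instead. As `t` runs from `0` to `1`, piece `b` shrinks continuously from its
original shape to a null set. -/
def clip (b : Bool) (t : ℝ) (c : Fin k → ℝ) : Fin k → ℝ := fun i =>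
  if b ∧ i.val = 0 then min (c i) (1 - t) else max (c i) t

theorem ValidCuts.clip (hc : ValidCuts k c) (ht : t ∈ Icc (0 : ℝ) 1) (b : Bool) :
    ValidCuts k (clip b t c) := by
  constructor
  · intro i j hij
    have hcij := hc.1 hij
    rw [Fin.le_def] at hij
    simp only [_root_.clip]
    split_ifs with hi hj hj
    · exact min_le_min_right _ hcij
    · exact (min_le_left _ _).trans (hcij.trans (le_max_left _ _))
    · exact absurd ⟨hj.1, by omega⟩ hi
    · exact max_le_max_right _ hcij
  · intro i
    simp only [_root_.clip]
    split_ifs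
    · exact ⟨le_min (hc.2 i).1 (sub_nonneg.2 ht.2), (min_le_left _ _).trans (hc.2 i).2⟩
    · exact ⟨ht.1.trans (le_max_right _ _), max_le (hc.2 i).2 ht.2⟩

theorem clip_zero (hc : ValidCuts k c) (b : Bool) : clip b 0 c = c := by
  funext i
  simp only [clip, sub_zero, min_eq_left (hc.2 i).2, max_eq_left (hc.2 i).1, ite_self]

theorem extCuts_clip_succ (hk : 1 ≤ k) (ht : t ≤ 1) (b : Bool) (c : Fin k → ℝ) (i : ℕ) :
    extCuts k (clip b t c) (i + 1) =
      if b ∧ i = 0 then min (extCuts k c (i + 1)) (1 - t) else max (extCuts k c (i + 1)) t := by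
  simp only [extCuts_succ, clip]
  split_ifs with hi h0 h0
  · rfl
  · rfl
  · omega
  · exact (max_eq_left ht).symm

theorem Icc_extCuts_clip_subset (hk : 1 ≤ k) (ht : t ≤ 1) {i : ℕ} (hi : i ∈ pieceIndices k b) :
    Icc (extCuts k (clip b t c) i) (extCuts k (clip b t c) (i + 1)) ⊆
      insert t (Icc (extCuts k c i) (extCuts k c (i + 1))) := by
  have hparity : decide (i % 2 = 0) = b := (Finset.mem_filter.1 hi).2
  rw [extCuts_clip_succ hk ht]
  rcases i with _ | i
  · have hb : b = true := by simpa using hparity.symm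
    rw [if_pos ⟨hb, rfl⟩, extCuts_zero, extCuts_zero]
    exact (Icc_subset_Icc_right (min_le_left _ _)).trans (subset_insert _ _)
  · have hfirst : ¬(b ∧ i = 0) := by
      rintro ⟨rfl, rfl⟩
      simp at hparity
    rw [if_neg (by simp), extCuts_clip_succ hk ht, if_neg hfirst]
    rintro x ⟨hlo, hup⟩
    obtain ⟨hXx, htx⟩ := max_le_iff.1 hlo
    rcases htx.eq_or_lt with rfl | htx
    · exact mem_insert _ _
    · exact mem_insert_of_mem _ ⟨hXx, (le_max_iff.1 hup).resolve_right htx.not_ge⟩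

theorem altPiece_clip_subset (hk : 1 ≤ k) (ht : t ≤ 1) (b : Bool) (c : Fin k → ℝ) :
    altPiece k (clip b t c) b ⊆ insert t (altPiece k c b) := by
  simp only [altPiece_eq_biUnion]
  refine iUnion₂_subset fun i hi => (Icc_extCuts_clip_subset hk ht hi).trans ?_
  exact insert_subset_insert (subset_biUnion_of_mem (u := fun i =>
    Icc (extCuts k c i) (extCuts k c (i + 1))) hi)

theorem altSum_clip_one (hk : 1 ≤ k) (hc : ValidCuts k c) (b : Bool) :
    altSum k F (extCuts k (clip b 1 c)) b = 0 := by
  refine Finset.sum_eq_zero fun i hi => ?_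
  have hparity : decide (i % 2 = 0) = b := (Finset.mem_filter.1 hi).2
  have hX := hc.extCuts_mem
  rw [extCuts_clip_succ hk le_rfl]
  rcases i with _ | i
  · have hb : b = true := by simpa using hparity.symm
    rw [if_pos ⟨hb, rfl⟩, extCuts_zero, sub_self, min_eq_right (hX _).1, sub_self]
  · have hfirst : ¬(b ∧ i = 0) := by
      rintro ⟨rfl, rfl⟩
      simp at hparity
    rw [if_neg (by simp), extCuts_clip_succ hk le_rfl, if_neg hfirst, max_eq_right (hX _).2,
      max_eq_right (hX _).2, sub_self]

theorem continuousOn_altSum_clip (hF : ContinuousOn F (Icc 0 1)) (hk : 1 ≤ k) (hc : ValidCuts k c)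
    (b : Bool) : ContinuousOn (fun t => altSum k F (extCuts k (clip b t c)) b) (Icc 0 1) := by
  have hcut : ∀ i, ContinuousOn (fun t => extCuts k (clip b t c) i) (Icc 0 1) := by
    rintro (_ | i)
    · simpa only [extCuts_zero] using continuousOn_const
    · refine ContinuousOn.congr ?_ fun t ht => extCuts_clip_succ hk ht.2 b c i
      split_ifs <;> fun_prop
  have hFcut : ∀ i, ContinuousOn (fun t => F (extCuts k (clip b t c) i)) (Icc 0 1) := fun i =>
    hF.comp (hcut i) fun t ht => (hc.clip ht b).extCuts_mem i
  exact continuousOn_finsetSum _ fun i _ => (hFcut (i + 1)).sub (hFcut i)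

/-- Moving from a piece `S` to an almost everywhere smaller piece `S'` costs Alice at most `Δ / δ`
times what it costs `w`, because `vA ≤ Δ ≤ (Δ / δ) w`. -/
theorem pieceVal_sub_le_of_subset {vA : ℝ → ℝ} {S S' : Set ℝ} (hδ : 0 < δ)
    (hA : IsValueDensity δ Δ vA) (hw : IsValueDensity δ Δ w) (hS : MeasurableSet S)
    (hS01 : S ⊆ Icc 0 1) (hS'01 : S' ⊆ Icc 0 1) (hsub : S' ≤ᵐ[volume] S) :
    pieceVal vA S - pieceVal vA S' ≤ Δ / δ * (pieceVal w S - pieceVal w S') := by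
  have hint : ∀ U ⊆ Icc (0 : ℝ) 1, IntegrableOn (fun x => Δ / δ * w x) U ∧ IntegrableOn vA U :=
    fun U hU => ⟨(hw.integrableOn.mono_set hU).const_mul _, hA.integrableOn.mono_set hU⟩
  have hexcess : ∀ U ⊆ Icc (0 : ℝ) 1,
      ∫ x in U, (Δ / δ * w x - vA x) = Δ / δ * pieceVal w U - pieceVal vA U := fun U hU => by
    rw [integral_sub (hint U hU).1 (hint U hU).2, integral_const_mul, pieceVal, pieceVal]
  have hnonneg : 0 ≤ᵐ[volume.restrict S] fun x => Δ / δ * w x - vA x := by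
    refine ae_restrict_of_forall_mem hS fun x hx => sub_nonneg.2 ?_
    have hwx := (hw.2.1 x (hS01 hx)).1
    have hAx := hA.2.1 x (hS01 hx)
    calc vA x ≤ Δ := hAx.2
      _ = Δ / δ * δ := (div_mul_cancel₀ Δ hδ.ne').symm
      _ ≤ Δ / δ * w x :=
        mul_le_mul_of_nonneg_left hwx (div_nonneg (hδ.le.trans (hAx.1.trans hAx.2)) hδ.le)
  have hmono := setIntegral_mono_set ((hint S hS01).1.sub (hint S hS01).2) hnonneg hsub
  simp only [Pi.sub_apply, hexcess S hS01, hexcess S' hS'01] at hmono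
  linarith

theorem exists_min_le_pieceVal_not {ρ : ℝ} {vA : ℝ → ℝ} (hδ : 0 < δ) (hA : IsValueDensity δ Δ vA)
    (hw : IsValueDensity δ Δ w) (hk : 1 ≤ k) (hρ : 0 ≤ ρ) (hc : ValidCuts k c) (b : Bool) :
    ∃ c', ValidCuts k c' ∧
      min 1 (pieceVal w (altPiece k c (!b)) + ρ) ≤ pieceVal w (altPiece k c' (!b)) ∧
      pieceVal vA (altPiece k c b) - pieceVal vA (altPiece k c' b) ≤ Δ / δ * ρ := by
  have hD : 0 ≤ Δ / δ := zero_le_one.trans (hw.isCumulative.one_le_div hδ)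
  have hcont := continuousOn_altSum_clip (hw.isCumulative.continuousOn hδ.le) hk hc b
  have hmem : max 0 (pieceVal w (altPiece k c b) - ρ) ∈
      Icc (altSum k (cumVal w) (extCuts k (clip b 1 c)) b)
        (altSum k (cumVal w) (extCuts k (clip b 0 c)) b) := by
    rw [altSum_clip_one hk hc, clip_zero hc, ← pieceVal_altPiece hw hc]
    exact ⟨le_max_left _ _, max_le (pieceVal_nonneg hw hδ.le hc b) (sub_le_self _ hρ)⟩
  obtain ⟨t, ht, hval⟩ := intermediate_value_Icc' zero_le_one hcont hmem
  have hc' := hc.clip ht b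
  replace hval : pieceVal w (altPiece k (clip b t c) b) = max 0 (pieceVal w (altPiece k c b) - ρ) :=
    (pieceVal_altPiece hw hc' b).trans hval
  have hsub : altPiece k (clip b t c) b ≤ᵐ[volume] altPiece k c b :=
    (altPiece_clip_subset hk ht.2 b c).eventuallyLE.trans (insert_ae_eq_self _ _).le
  have hcost := pieceVal_sub_le_of_subset hδ hA hw (measurableSet_altPiece k c b)
    (hc.altPiece_subset b) (hc'.altPiece_subset b) hsub
  have hsum := pieceVal_add_pieceVal_not hw hc b
  have hsum' := pieceVal_add_pieceVal_not hw hc' b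
  refine ⟨clip b t c, hc', ?_, hcost.trans (mul_le_mul_of_nonneg_left ?_ hD)⟩
  · rcases max_choice 0 (pieceVal w (altPiece k c b) - ρ) with hmax | hmax
    · exact (min_le_left _ _).trans (by linarith)
    · exact (min_le_right _ _).trans (by linarith)
  · linarith [le_max_right 0 (pieceVal w (altPiece k c b) - ρ)]

end Clipping

section Stackelberg

variable {δ Δ ρ : ℝ} {k : ℕ} {b : Bool} {c : Fin k → ℝ} {vA vB w : ℝ → ℝ}

theorem pieceVal_le_stackelbergValue (hδ : 0 ≤ δ) (hA : IsValueDensity δ Δ vA)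
    (hc : ValidCuts k c) (hb : 1 / 2 ≤ pieceVal vB (altPiece k c (!b))) :
    pieceVal vA (altPiece k c b) ≤ stackelbergValue k vA vB := by
  refine le_csSup ⟨1, ?_⟩ ⟨c, b, hc, hb, rfl⟩
  rintro u ⟨c, b, hc, -, rfl⟩
  exact pieceVal_le_one hA hδ hc b

theorem validCuts_const {x : ℝ} (k : ℕ) (hx : x ∈ Icc (0 : ℝ) 1) : ValidCuts k fun _ => x :=
  ⟨monotone_const, fun _ => hx⟩

theorem exists_half_le_pieceVal_not (hB : IsValueDensity δ Δ vB) (hc : ValidCuts k c) :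
    ∃ b, 1 / 2 ≤ pieceVal vB (altPiece k c (!b)) := by
  have hsum := pieceVal_add_pieceVal_not hB hc true
  rcases le_total (pieceVal vB (altPiece k c true)) (1 / 2) with h | h
  · exact ⟨true, by linarith⟩
  · exact ⟨false, h⟩

theorem stackelbergValue_le {u : ℝ} (hB : IsValueDensity δ Δ vB)
    (hu : ∀ (c : Fin k → ℝ) b, ValidCuts k c → 1 / 2 ≤ pieceVal vB (altPiece k c (!b)) →
      pieceVal vA (altPiece k c b) ≤ u) : stackelbergValue k vA vB ≤ u := by
  have hc := validCuts_const k (x := 0) (by simp)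
  obtain ⟨b, hb⟩ := exists_half_le_pieceVal_not hB hc
  refine csSup_le ⟨_, _, b, hc, hb, rfl⟩ ?_
  rintro _ ⟨c, b, hc, hb, rfl⟩
  exact hu c b hc hb

theorem stackelbergValue_le_one (hδ : 0 ≤ δ) (hA : IsValueDensity δ Δ vA)
    (hB : IsValueDensity δ Δ vB) : stackelbergValue k vA vB ≤ 1 :=
  stackelbergValue_le hB fun _ b hc _ => pieceVal_le_one hA hδ hc b

theorem exists_lt_pieceVal {u : ℝ} (hB : IsValueDensity δ Δ vB)
    (hu : u < stackelbergValue k vA vB) :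
    ∃ (c : Fin k → ℝ) (b : Bool), ValidCuts k c ∧ 1 / 2 ≤ pieceVal vB (altPiece k c (!b)) ∧
      u < pieceVal vA (altPiece k c b) := by
  contrapose! hu
  exact stackelbergValue_le hB hu

/-- A partition feasible for `vB` is almost feasible for `w`, and is repaired at small cost. -/
theorem stackelbergValue_le_add (hδ : 0 < δ) (hA : IsValueDensity δ Δ vA)
    (hB : IsValueDensity δ Δ vB) (hw : IsValueDensity δ Δ w) (hk : 1 ≤ k) (hρ : 0 ≤ ρ)
    (hclose : ∀ (c : Fin k → ℝ) b, ValidCuts k c →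
      |pieceVal vB (altPiece k c b) - pieceVal w (altPiece k c b)| ≤ ρ) :
    stackelbergValue k vA vB ≤ stackelbergValue k vA w + Δ / δ * ρ := by
  refine stackelbergValue_le hB fun c b hc hb => ?_
  obtain ⟨c', hc', hw', hA'⟩ := exists_min_le_pieceVal_not hδ hA hw hk hρ hc b
  have hfeasible : 1 / 2 ≤ pieceVal w (altPiece k c' (!b)) :=
    (le_min (by norm_num) (by linarith [(abs_le.1 (hclose c (!b) hc)).2])).trans hw'
  linarith [pieceVal_le_stackelbergValue hδ.le hA hc' hfeasible]

/-- With valuation `vB`, piece `b` is a best choice from the partition with cuts `c`. -/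
def Prefers (k : ℕ) (vB : ℝ → ℝ) (c : Fin k → ℝ) (b : Bool) : Prop :=
  pieceVal vB (altPiece k c (!b)) ≤ pieceVal vB (altPiece k c b)

theorem prefers_iff_half_le (hB : IsValueDensity δ Δ vB) (hc : ValidCuts k c) :
    Prefers k vB c b ↔ 1 / 2 ≤ pieceVal vB (altPiece k c b) := by
  have hsum := pieceVal_add_pieceVal_not hB hc b
  constructor <;> intro h <;> unfold Prefers at * <;> linarith

theorem Prefers.eq_of_half_lt {b' : Bool} (h : Prefers k vB c b') (hB : IsValueDensity δ Δ vB)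
    (hc : ValidCuts k c) (hb : 1 / 2 < pieceVal vB (altPiece k c b)) : b' = b := by
  by_contra hne
  have hb' := (prefers_iff_half_le hB hc).1 h
  rw [Bool.eq_not.2 hne] at hb'
  linarith [pieceVal_add_pieceVal_not hB hc b]

/-- Cuts that leave the follower a strict preference by a margin larger than the uncertainty about
their valuation force the choice whatever the tie-breaking. -/
theorem exists_robust_cuts (hδ : 0 < δ) (hA : IsValueDensity δ Δ vA) (hw : IsValueDensity δ Δ w)
    (hk : 1 ≤ k) (hρ : 0 < ρ) :
    ∃ c, ValidCuts k c ∧ ∀ vB, IsValueDensity δ Δ vB →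
      (∀ (c : Fin k → ℝ) b, ValidCuts k c →
        |pieceVal vB (altPiece k c b) - pieceVal w (altPiece k c b)| ≤ ρ) →
      ∀ b, Prefers k vB c b →
        stackelbergValue k vA vB - pieceVal vA (altPiece k c (!b)) ≤ 4 * (Δ / δ) * ρ := by
  have hρD : ρ ≤ Δ / δ * ρ :=
    le_mul_of_one_le_left hρ.le (hw.isCumulative.one_le_div hδ)
  rcases lt_or_ge (1 / 2) (2 * ρ) with hlarge | hsmall
  · have hc := validCuts_const k (x := 0) (by simp)
    refine ⟨_, hc, fun vB hB _ b _ => ?_⟩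
    linarith [stackelbergValue_le_one (k := k) hδ.le hA hB, pieceVal_nonneg hA hδ.le hc (!b)]
  obtain ⟨c₀, b₀, hc₀, hfeasible, hvalue⟩ := exists_lt_pieceVal hw (sub_lt_self _ hρ)
  obtain ⟨c, hc, hmargin, hcost⟩ :=
    exists_min_le_pieceVal_not hδ hA hw hk (by linarith : 0 ≤ 2 * ρ) hc₀ b₀
  refine ⟨c, hc, fun vB hB hclose b hb => ?_⟩
  have hstrict : 1 / 2 + 2 * ρ ≤ pieceVal w (altPiece k c (!b₀)) :=
    (le_min (by linarith) (by linarith)).trans hmargin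
  have hchoice : b = !b₀ :=
    hb.eq_of_half_lt hB hc (by linarith [(abs_le.1 (hclose c (!b₀) hc)).1])
  have hstack := stackelbergValue_le_add hδ hA hB hw hk hρ.le hclose
  rw [hchoice, Bool.not_not]
  linarith

end Stackelberg

section QueryTree

universe u v

/-- A deterministic adaptive program that asks yes/no questions from `Q` and returns an element of
`α`. -/
inductive QueryTree (Q : Type u) (α : Type v) : Type (max u v)
  | ret (a : α) : QueryTree Q α
  | ask (q : Q) (next : Bool → QueryTree Q α) : QueryTree Q α

namespace QueryTree

variable {Q : Type u} {α β : Type v}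

/-- Sequential composition of query trees. -/
protected def bind : QueryTree Q α → (α → QueryTree Q β) → QueryTree Q β
  | ret a, f => f a
  | ask q next, f => ask q fun b => (next b).bind f

instance : Monad (QueryTree Q) where
  pure := ret
  bind := QueryTree.bind

instance [Inhabited α] : Inhabited (QueryTree Q α) := ⟨ret default⟩

/-- `Ensures R P n t`: if the answer `b` to each question `q` satisfies `R q b`, then `t` returns,
after at most `n` questions, a result satisfying `P`. -/
inductive Ensures (R : Q → Bool → Prop) (P : α → Prop) : ℕ → QueryTree Q α → Prop
  | ret {n : ℕ} {a : α} (h : P a) : Ensures R P n (ret a)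
  | ask {n : ℕ} {q : Q} {next : Bool → QueryTree Q α}
      (h : ∀ b, R q b → Ensures R P n (next b)) : Ensures R P (n + 1) (ask q next)

variable {R : Q → Bool → Prop} {P : α → Prop} {P' : β → Prop} {m n : ℕ} {t : QueryTree Q α}

theorem Ensures.mono {P' : α → Prop} (h : Ensures R P n t) (hP : ∀ a, P a → P' a) :
    Ensures R P' n t := by
  induction h with
  | ret h => exact .ret (hP _ h)
  | ask _ ih => exact .ask ih

theorem Ensures.mono_steps (h : Ensures R P m t) (hmn : m ≤ n) : Ensures R P n t := by
  induction h generalizing n with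
  | ret h => exact .ret h
  | ask _ ih =>
    obtain ⟨n, rfl⟩ := Nat.exists_eq_add_of_le' (Nat.one_le_of_lt hmn)
    exact .ask fun b hb => ih b hb (Nat.le_of_succ_le_succ hmn)

theorem Ensures.bind {f : α → QueryTree Q β} (h : Ensures R P m t)
    (hf : ∀ a, P a → Ensures R P' n (f a)) : Ensures R P' (m + n) (t >>= f) := by
  induction h with
  | ret h => exact (hf _ h).mono_steps (Nat.le_add_left _ _)
  | @ask m _ _ _ ih =>
    rw [Nat.add_right_comm]
    exact .ask ih

theorem Ensures.map {f : α → β} (h : Ensures R P n t) (hf : ∀ a, P a → P' (f a)) :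
    Ensures R P' n (t >>= fun a => pure (f a)) :=
  h.bind (n := 0) fun a ha => .ret (hf a ha)

/-- Runs `f 0, …, f (n - 1)` and returns the table of results, extended by junk. -/
def tabulate [Inhabited α] (f : ℕ → QueryTree Q α) : ℕ → QueryTree Q (ℕ → α)
  | 0 => pure default
  | n + 1 => do
    let z ← tabulate f n
    let a ← f n
    pure (Function.update z n a)

theorem ensures_tabulate [Inhabited α] {f : ℕ → QueryTree Q α} {P : ℕ → α → Prop} (n : ℕ)
    (hf : ∀ j < n, Ensures R (P j) m (f j)) :
    Ensures R (fun z => ∀ j < n, P j (z j)) (n * m) (tabulate f n) := by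
  induction n with
  | zero => exact .ret (by simp)
  | succ n ih =>
    rw [Nat.succ_mul]
    refine (ih fun j hj => hf j (hj.trans n.lt_succ_self)).bind fun z hz =>
      (hf n n.lt_succ_self).map fun a ha j hj => ?_
    rcases Nat.lt_succ_iff_lt_or_eq.1 hj with hj | rfl
    · rw [Function.update_of_ne hj.ne]
      exact hz j hj
    · rwa [Function.update_self]

/-- Iterates `f` from `a` for `n` steps and returns the sequence of points visited, extended by
junk. -/
def trajectory (f : α → QueryTree Q α) (a : α) : ℕ → QueryTree Q (ℕ → α)
  | 0 => pure fun _ => a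
  | n + 1 => do
    let z ← trajectory f a n
    let b ← f (z n)
    pure (Function.update z (n + 1) b)

theorem ensures_trajectory {f : α → QueryTree Q α} {a : α} {I : α → Prop} {S : α → α → Prop}
    (ha : I a) (hf : ∀ x, I x → Ensures R (fun y => I y ∧ S x y) m (f x)) (n : ℕ) :
    Ensures R (fun z => z 0 = a ∧ I (z n) ∧ ∀ i < n, S (z i) (z (i + 1))) (n * m)
      (trajectory f a n) := by
  induction n with
  | zero => exact .ret (by simpa using ha)
  | succ n ih =>
    rw [Nat.succ_mul]
    refine ih.bind fun z hz => (hf (z n) hz.2.1).map fun b hb => ⟨?_, ?_, fun i hi => ?_⟩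
    · rw [Function.update_of_ne n.succ_ne_zero.symm, hz.1]
    · rw [Function.update_self]
      exact hb.1
    · rw [Function.update_of_ne hi.ne]
      rcases Nat.lt_succ_iff_lt_or_eq.1 hi with hi | rfl
      · rw [Function.update_of_ne (Nat.succ_lt_succ hi).ne]
        exact hz.2.2 i hi
      · rw [Function.update_self]
        exact hb.2

/-- The tree that remains after the answer `b`; a tree that has returned stays put. -/
def advance (b : Bool) : QueryTree Q α → QueryTree Q α
  | ret a => ret a
  | ask _ next => next b

/-- The question asked next; once the tree has returned, its result is asked forever. -/
def query : QueryTree Q Q → Q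
  | ret q => q
  | ask q _ => q

theorem Ensures.advance {P : Q → Prop} {t : QueryTree Q Q} {b : Bool} (h : Ensures R P n t)
    (hb : R t.query b) : Ensures R P (n - 1) (t.advance b) := by
  cases h with
  | ret h => exact .ret h
  | ask h => exact h b hb

end QueryTree

end QueryTree

section TreeStrategy

variable {δ Δ ε : ℝ} {k : ℕ} {vA vB : ℝ → ℝ} {SB : BobStrategy k}

/-- The valid vectors of `k` cut points. -/
abbrev Cuts (k : ℕ) := {c : Fin k → ℝ // ValidCuts k c}

instance (k : ℕ) : Inhabited (Cuts k) := ⟨fun _ => 0, validCuts_const k (by simp)⟩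

/-- The answers `b` that a Bob with valuation `vB` may give when asked to choose from the cuts
`c`. -/
def BestReply (vB : ℝ → ℝ) (c : Cuts k) (b : Bool) : Prop := Prefers k vB c b

/-- Bob always takes one of the pieces he values most; ties may be broken in any way. -/
def IsMyopic (k : ℕ) (vB : ℝ → ℝ) (SB : BobStrategy k) : Prop :=
  ∀ T h c, Prefers k vB c (SB T h c)

theorem isMyopic_myopicBob (k : ℕ) (vA vB : ℝ → ℝ) : IsMyopic k vB (myopicBob k vA vB) := by
  intro T h c
  unfold Prefers myopicBob
  split_ifs with htrue hfalse
  · exact htrue.le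
  · exact hfalse.le
  · exact le_of_not_gt hfalse
  · exact le_of_not_gt htrue

/-- The strategy that, at horizon `T`, plays the questions of the tree `tree T`, reading Bob's
choices as answers, and repeats the returned cuts afterwards. -/
def treeStrategy (tree : ℕ → QueryTree (Cuts k) (Cuts k)) : AliceStrategy k := fun T h =>
  (h.foldl (fun t round => t.advance round.2) (tree T)).query

theorem aliceValid_treeStrategy (tree : ℕ → QueryTree (Cuts k) (Cuts k)) :
    AliceValid k (treeStrategy tree) := fun _ _ => Subtype.property _

theorem ensures_foldl_advance {P : Cuts k → Prop} (hSB : IsMyopic k vB SB)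
    (tree : ℕ → QueryTree (Cuts k) (Cuts k)) {N T : ℕ}
    (htree : (tree T).Ensures (BestReply vB) P N) (t : ℕ) :
    ((playHist k (treeStrategy tree) SB T t).foldl (fun t round => t.advance round.2)
      (tree T)).Ensures (BestReply vB) P (N - t) := by
  induction t with
  | zero => exact htree
  | succ t ih =>
    simp only [playHist, List.foldl_append]
    exact ih.advance (hSB _ _ _)

theorem treeStrategy_of_le {P : Cuts k → Prop} (hSB : IsMyopic k vB SB)
    (tree : ℕ → QueryTree (Cuts k) (Cuts k)) {N T t : ℕ}
    (htree : (tree T).Ensures (BestReply vB) P N) (ht : N ≤ t) :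
    ∃ c : Cuts k, P c ∧ roundCuts k (treeStrategy tree) SB T t = c := by
  have hstate := ensures_foldl_advance hSB tree htree t
  rw [Nat.sub_eq_zero_of_le ht] at hstate
  simp only [roundCuts, treeStrategy]
  generalize List.foldl _ (tree T) _ = state at hstate ⊢
  cases hstate with
  | ret h => exact ⟨_, h, rfl⟩

theorem aliceRegret_treeStrategy_le (hδ : 0 ≤ δ) (hA : IsValueDensity δ Δ vA)
    (hB : IsValueDensity δ Δ vB) (hε : 0 ≤ ε) (hSB : IsMyopic k vB SB)
    (tree : ℕ → QueryTree (Cuts k) (Cuts k)) {N T : ℕ}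
    (htree : (tree T).Ensures (BestReply vB) (fun c => ∀ b, BestReply vB c b →
      stackelbergValue k vA vB - pieceVal vA (altPiece k c (!b)) ≤ ε) N) :
    aliceRegret k vA vB (treeStrategy tree) SB T ≤ N + T * ε := by
  have hround : ∀ t, stackelbergValue k vA vB - pieceVal vA (altPiece k
      (roundCuts k (treeStrategy tree) SB T t) (!(roundChoice k (treeStrategy tree) SB T t))) ≤
      (if t < N then 1 else 0) + ε := by
    intro t
    split_ifs with ht
    · refine (sub_le_self _ (pieceVal_nonneg hA hδ (aliceValid_treeStrategy tree T _) _)).trans ?_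
      exact (stackelbergValue_le_one hδ hA hB).trans (le_add_of_nonneg_right hε)
    · obtain ⟨c, hgood, hc⟩ := treeStrategy_of_le hSB tree htree (not_lt.1 ht)
      rw [zero_add, roundChoice, hc]
      exact hgood _ (hSB _ _ _)
  calc aliceRegret k vA vB (treeStrategy tree) SB T
      ≤ ∑ t ∈ Finset.range T, ((if t < N then 1 else 0) + ε) :=
      Finset.sum_le_sum fun t _ => hround t
    _ = ((Finset.range T).filter (· < N)).card + T * ε := by
      rw [Finset.sum_add_distrib, Finset.sum_boole, Finset.sum_const, Finset.card_range,
        nsmul_eq_mul]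
    _ ≤ N + T * ε := by
      gcongr
      refine (Finset.card_le_card fun t ht => ?_).trans_eq (Finset.card_range N)
      exact Finset.mem_range.2 (Finset.mem_filter.1 ht).2

end TreeStrategy

section Identification

variable {δ Δ η ε x s : ℝ} {M n : ℕ} {F G : ℝ → ℝ}

/-- Up to an error `ε` in value, `[y, s]` completes `[0, a]` to one half of the cake, `s` being `1`
if there is not enough cake to the right of `y`. -/
structure CompletesHalf (F : ℝ → ℝ) (ε a y s : ℝ) : Prop where
  mem : s ∈ Icc y 1
  abs_sub_le : |F s - min (F y + (1 / 2 - F a)) 1| ≤ ε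

theorem CompletesHalf.abs_sub_half_le (h : CompletesHalf F ε 0 0 s) : |F s - 1 / 2| ≤ ε := by
  have hs := h.abs_sub_le
  rwa [add_sub_cancel, min_eq_left (by norm_num)] at hs

/-- The points found by exploration: an approximate midpoint, the points reached from it by marching
to the right with steps of equal unknown value, and the partners of the grid points at a distance
of half the cake. -/
structure Findings where
  mid : ℝ
  march : ℕ → ℝ
  grid : ℕ → ℝ

/-- The findings `d` are what exploration with step `η`, error `ε`, march length `M` and grid size
`n` may report when the cumulative value is `F`. -/
structure Consistent (F : ℝ → ℝ) (η ε : ℝ) (M n : ℕ) (d : Findings) : Prop where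
  le_mid : η ≤ d.mid
  mid : CompletesHalf F ε 0 0 d.mid
  march_zero : d.march 0 = d.mid
  march : ∀ i < M, CompletesHalf F ε (d.mid - η) (d.march i) (d.march (i + 1))
  grid : ∀ j < n, CompletesHalf F ε 0 (j / n) (d.grid j)

/-- The step `η` and the error `ε` are small enough, and the march length `M` and the grid size `n`
large enough, for consistent findings to determine the cumulative value up to `O(η)`. -/
structure IsResolution (δ Δ η ε : ℝ) (M n : ℕ) : Prop where
  pos : 0 < η
  four_mul_le : 4 * Δ * η ≤ 1
  error_le : ε ≤ δ * η / 2
  drift_le : (M + 1) * ε ≤ η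
  one_le_march : 1 ≤ M * (δ * η)
  one_le_grid : 1 ≤ n * η

/-- The unknown value by which consecutive points of the march differ. -/
def marchStep (F : ℝ → ℝ) (η : ℝ) (d : Findings) : ℝ := 1 / 2 - F (d.mid - η)

/-- Errors in a saturating arithmetic progression add up, because `min · 1` is `1`-Lipschitz. -/
theorem abs_sub_min_add_mul_le {z : ℕ → ℝ} {p u : ℝ} (hp : p ≤ 1) (hu : 0 ≤ u)
    (hzero : |z 0 - p| ≤ ε) (hsucc : ∀ i < M, |z (i + 1) - min (z i + u) 1| ≤ ε) {i : ℕ}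
    (hi : i ≤ M) : |z i - min (p + i * u) 1| ≤ (i + 1) * ε := by
  induction i with
  | zero => simpa [hp] using hzero
  | succ i ih =>
    have hind : |z i - min (p + i * u) 1| ≤ (i + 1) * ε := ih (by omega)
    have hsat : min (min (p + i * u) 1 + u) 1 = min (p + (i + 1) * u) 1 := by
      rw [← min_add_add_right, min_assoc, min_eq_right (le_add_of_nonneg_right hu)]
      ring_nf
    have hlip : |min (z i + u) 1 - min (min (p + i * u) 1 + u) 1| ≤ (i + 1) * ε :=
      (abs_min_sub_min_le_max _ _ _ _).trans
        (max_le (by simpa using hind) (by simpa using (abs_nonneg _).trans hind))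
    push_cast
    rw [← hsat]
    calc |z (i + 1) - min (min (p + i * u) 1 + u) 1|
        ≤ |z (i + 1) - min (z i + u) 1| + |min (z i + u) 1 - min (min (p + i * u) 1 + u) 1| :=
          abs_sub_le _ _ _
      _ ≤ ε + (i + 1) * ε := add_le_add (hsucc i (by omega)) hlip
      _ = (i + 1 + 1) * ε := by ring

/-- The gap can only grow up to step `N`, and from then on the second progression stays within `β`
of saturation. -/
theorem min_add_mul_sub_min_add_mul_le {p u v β : ℝ} {N : ℕ} (hu : 0 ≤ u) (hv : 0 ≤ v)
    (hβ : 0 ≤ β) (hNu : p + N * u ≤ 1 + u) (hNv : 1 - β ≤ p + N * v) (i : ℕ) :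
    min (p + i * u) 1 - min (p + i * v) 1 ≤ u + β := by
  rcases le_total i N with hi | hi
  · have hi' : (i : ℝ) ≤ N := by exact_mod_cast hi
    have hdiff : p + i * u ≤ p + i * v + (u + β) := by
      rcases le_total u v with huv | huv
      · linarith [mul_le_mul_of_nonneg_left huv i.cast_nonneg]
      · linarith [mul_le_mul_of_nonneg_right hi' (sub_nonneg.2 huv)]
    rw [sub_le_iff_le_add', ← min_add_add_right]
    exact min_le_min hdiff (le_add_of_nonneg_right (add_nonneg hu hβ))
  · have hi' : (N : ℝ) ≤ i := by exact_mod_cast hi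
    have hsat : 1 - β ≤ min (p + i * v) 1 :=
      le_min (hNv.trans (by gcongr)) (sub_le_self _ hβ)
    linarith [min_le_right (p + i * u) 1]

namespace IsResolution

theorem error_le_half (hR : IsResolution δ Δ η ε M n) (hF : IsCumulative δ Δ F) : ε ≤ η / 2 := by
  linarith [hR.error_le, mul_le_of_le_one_left hR.pos.le hF.lower_le_one]

theorem exists_march_end {u : ℝ} (hR : IsResolution δ Δ η ε M n) (hδ : 0 < δ)
    (hu : δ * η / 2 ≤ u) : ∃ N ≤ M, 1 / 2 ≤ N * u ∧ N * u ≤ 1 / 2 + u := by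
  have hu0 : 0 < u := (half_pos (mul_pos hδ hR.pos)).trans_le hu
  have hmul : 1 / (2 * u) * u = 1 / 2 := by field_simp
  refine ⟨⌈1 / (2 * u)⌉₊, Nat.ceil_le.2 ?_, ?_, ?_⟩
  · refine (div_le_iff₀ (by positivity)).2 (hR.one_le_march.trans ?_)
    exact mul_le_mul_of_nonneg_left (by linarith) M.cast_nonneg
  · exact hmul ▸ mul_le_mul_of_nonneg_right (Nat.le_ceil _) hu0.le
  · have hlt := Nat.ceil_lt_add_one (a := 1 / (2 * u)) (by positivity)
    linarith [mul_le_mul_of_nonneg_right hlt.le hu0.le]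

theorem le_mid (hR : IsResolution δ Δ η ε M n) (hF : IsCumulative δ Δ F)
    (hs : CompletesHalf F ε 0 0 s) : η ≤ s := by
  have hΔ : 0 < Δ := zero_lt_one.trans_le hF.one_le_upper
  have hη : δ * η ≤ Δ * η :=
    mul_le_mul_of_nonneg_right (hF.lower_le_one.trans hF.one_le_upper) hR.pos.le
  have hFs := hF.sub_le_mul (x := 0) (by simp) hs.mem hs.mem.1
  rw [hF.map_zero] at hFs
  refine le_of_mul_le_mul_left ?_ hΔ
  linarith [hR.error_le, hR.four_mul_le, (abs_le.1 hs.abs_sub_half_le).1]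

theorem map_mid_sub_le_half (hδ : 0 < δ) (hR : IsResolution δ Δ η ε M n)
    (hF : IsCumulative δ Δ F) (hs : CompletesHalf F ε 0 0 s) : F (s - η) ≤ 1 / 2 := by
  have hle : s - η ≤ s := sub_le_self _ hR.pos.le
  have h := hF.mul_sub_le ⟨sub_nonneg.2 (hR.le_mid hF hs), hle.trans hs.mem.2⟩ hs.mem hle
  rw [sub_sub_cancel] at h
  linarith [hR.error_le, mul_pos hδ hR.pos, (abs_le.1 hs.abs_sub_half_le).2]

end IsResolution

namespace Consistent

variable {d : Findings}

theorem error_nonneg (hd : Consistent F η ε M n d) : 0 ≤ ε := (abs_nonneg _).trans hd.mid.abs_sub_le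

theorem mid_mem (hd : Consistent F η ε M n d) : d.mid ∈ Icc (0 : ℝ) 1 := hd.mid.mem

theorem march_mem_Icc_mid (hd : Consistent F η ε M n d) {i : ℕ} (hi : i ≤ M) :
    d.march i ∈ Icc d.mid 1 := by
  induction i with
  | zero => exact ⟨hd.march_zero.ge, hd.march_zero.trans_le hd.mid_mem.2⟩
  | succ i ih =>
    have hstep := (hd.march i hi).mem
    exact ⟨(ih (by omega)).1.trans hstep.1, hstep.2⟩

theorem march_mem (hd : Consistent F η ε M n d) {i : ℕ} (hi : i ≤ M) :
    d.march i ∈ Icc (0 : ℝ) 1 := Icc_subset_Icc_left hd.mid_mem.1 (hd.march_mem_Icc_mid hi)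

theorem marchStep_mem (hF : IsCumulative δ Δ F) (hd : Consistent F η ε M n d)
    (hR : IsResolution δ Δ η ε M n) :
    marchStep F η d ∈ Icc (δ * η / 2) (Δ * η + ε) := by
  have hmem : d.mid - η ∈ Icc (0 : ℝ) 1 :=
    ⟨sub_nonneg.2 hd.le_mid, (sub_le_self _ hR.pos.le).trans hd.mid_mem.2⟩
  have hle : d.mid - η ≤ d.mid := sub_le_self _ hR.pos.le
  have hlower := hF.mul_sub_le hmem hd.mid_mem hle
  have hupper := hF.sub_le_mul hmem hd.mid_mem hle
  obtain ⟨hmid₁, hmid₂⟩ := abs_le.1 hd.mid.abs_sub_half_le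
  rw [sub_sub_cancel] at hlower hupper
  unfold marchStep
  constructor <;> linarith [hR.error_le]

theorem abs_march_sub_le (hδ : 0 < δ) (hF : IsCumulative δ Δ F) (hd : Consistent F η ε M n d)
    (hR : IsResolution δ Δ η ε M n) {i : ℕ} (hi : i ≤ M) :
    |F (d.march i) - min (1 / 2 + i * marchStep F η d) 1| ≤ η := by
  have hstep : 0 ≤ marchStep F η d :=
    (half_pos (mul_pos hδ hR.pos)).le.trans (marchStep_mem hF hd hR).1
  have hzero : |F (d.march 0) - 1 / 2| ≤ ε := hd.march_zero ▸ hd.mid.abs_sub_half_le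
  calc |F (d.march i) - min (1 / 2 + i * marchStep F η d) 1|
      ≤ (i + 1) * ε :=
        abs_sub_min_add_mul_le (z := fun i => F (d.march i)) (by norm_num) hstep hzero
          (fun i hi => (hd.march i hi).abs_sub_le) hi
    _ ≤ (M + 1) * ε := by
        have := hd.error_nonneg
        gcongr
    _ ≤ η := hR.drift_le

/-- Under `F` the march comes near the right end of the cake after about `1 / (2 * marchStep F)`
steps. As `F` and `G` have comparable densities, the same is true under `G`. -/
theorem march_sub_march_le (hδ : 0 < δ) (hF : IsCumulative δ Δ F) (hG : IsCumulative δ Δ G)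
    (hFd : Consistent F η ε M n d) (hGd : Consistent G η ε M n d)
    (hR : IsResolution δ Δ η ε M n) {i : ℕ} (hi : i ≤ M) :
    F (d.march i) - G (d.march i) ≤ 6 * (Δ / δ * η) := by
  have hu := marchStep_mem hF hFd hR
  have hv := marchStep_mem hG hGd hR
  set u := marchStep F η d
  set v := marchStep G η d
  have hη := hR.pos
  have hδη : 0 < δ * η / 2 := half_pos (mul_pos hδ hη)
  obtain ⟨N, hNM, hN₁, hN₂⟩ := hR.exists_march_end hδ hu.1
  have hFN : 1 - η ≤ F (d.march N) := by
    have h := hFd.abs_march_sub_le hδ hF hR hNM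
    rw [min_eq_right (by linarith)] at h
    linarith [(abs_le.1 h).1]
  have hGN : 1 - Δ / δ * η ≤ G (d.march N) :=
    hF.one_sub_le_of_one_sub_le hδ hG (hFd.march_mem hNM) hFN
  have hend : 1 - (Δ / δ * η + η) ≤ 1 / 2 + N * v := by
    linarith [(abs_le.1 (hGd.abs_march_sub_le hδ hG hR hNM)).2, min_le_left (1 / 2 + N * v) 1]
  have hDη : η ≤ Δ / δ * η := le_mul_of_one_le_left hη.le (hF.one_le_div hδ)
  have hprogressions := min_add_mul_sub_min_add_mul_le (hδη.le.trans hu.1) (hδη.le.trans hv.1)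
    (by linarith) (p := 1 / 2) (by linarith) hend i
  linarith [(abs_le.1 (hFd.abs_march_sub_le hδ hF hR hi)).2,
    (abs_le.1 (hGd.abs_march_sub_le hδ hG hR hi)).1, hu.2, hR.error_le_half hF,
    mul_le_mul_of_nonneg_right (hF.upper_le_div hδ) hη.le]

theorem exists_march_le (hδ : 0 < δ) (hF : IsCumulative δ Δ F) (hd : Consistent F η ε M n d)
    (hR : IsResolution δ Δ η ε M n) (hx : x ∈ Icc d.mid 1) :
    ∃ i ≤ M, d.march i ≤ x ∧ F x - F (d.march i) ≤ 2 * (Δ / δ * η) := by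
  have hη := hR.pos
  have hxmem : x ∈ Icc (0 : ℝ) 1 := Icc_subset_Icc_left hd.mid_mem.1 hx
  have hDη : η ≤ Δ / δ * η := le_mul_of_one_le_left hη.le (hF.one_le_div hδ)
  have hstep := marchStep_mem hF hd hR
  set i := Nat.findGreatest (fun i => d.march i ≤ x) M
  have hle : d.march i ≤ x :=
    Nat.findGreatest_spec (P := fun i => d.march i ≤ x) M.zero_le (hd.march_zero.trans_le hx.1)
  refine ⟨i, Nat.findGreatest_le M, hle, ?_⟩
  rcases (Nat.findGreatest_le M : i ≤ M).lt_or_eq with hi | hi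
  · have hlt : x < d.march (i + 1) := not_le.1 (Nat.findGreatest_is_greatest i.lt_succ_self hi)
    have hFx : F x ≤ F (d.march (i + 1)) := hF.monotoneOn hδ.le hxmem (hd.march_mem hi) hlt.le
    have hnext : F (d.march (i + 1)) - min (F (d.march i) + marchStep F η d) 1 ≤ ε :=
      (abs_le.1 (hd.march i hi).abs_sub_le).2
    linarith [hstep.2, min_le_left (F (d.march i) + marchStep F η d) 1,
      hR.error_le_half hF, mul_le_mul_of_nonneg_right (hF.upper_le_div hδ) hη.le]
  · have hM : 1 / 2 ≤ M * marchStep F η d := by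
      linarith [mul_le_mul_of_nonneg_left hstep.1 M.cast_nonneg, hR.one_le_march]
    have hend := hd.abs_march_sub_le hδ hF hR le_rfl
    rw [min_eq_right (by linarith), ← hi] at hend
    linarith [(abs_le.1 hend).1, (hF.mem_Icc hδ.le hxmem).2]

theorem sub_le_of_mid_le (hδ : 0 < δ) (hF : IsCumulative δ Δ F) (hG : IsCumulative δ Δ G)
    (hFd : Consistent F η ε M n d) (hGd : Consistent G η ε M n d)
    (hR : IsResolution δ Δ η ε M n) (hx : x ∈ Icc d.mid 1) :
    F x - G x ≤ 8 * (Δ / δ * η) := by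
  obtain ⟨i, hi, hle, hgap⟩ := hFd.exists_march_le hδ hF hR hx
  have hGx := hG.monotoneOn hδ.le (hGd.march_mem hi) (Icc_subset_Icc_left hGd.mid_mem.1 hx) hle
  linarith [march_sub_march_le hδ hF hG hFd hGd hR hi]

theorem grid_sub_grid_le (hδ : 0 < δ) (hF : IsCumulative δ Δ F) (hG : IsCumulative δ Δ G)
    (hFd : Consistent F η ε M n d) (hGd : Consistent G η ε M n d)
    (hR : IsResolution δ Δ η ε M n) {j : ℕ} (hj : j < n) (hmid : j / n ≤ d.mid) :
    F (j / n) - G (j / n) ≤ 8 * (Δ / δ * η) + 3 * ε := by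
  set p : ℝ := j / n
  have hp : p ∈ Icc (0 : ℝ) 1 := ⟨by positivity, hmid.trans hFd.mid_mem.2⟩
  have hs : d.grid j ∈ Icc p 1 := (hFd.grid j hj).mem
  have hFmid := (abs_le.1 hFd.mid.abs_sub_half_le).2
  have hFp : F p ≤ 1 / 2 + ε := by linarith [hF.monotoneOn hδ.le hp hFd.mid_mem hmid]
  have hFs : F p + 1 / 2 - 2 * ε ≤ F (d.grid j) := by
    have h := (abs_le.1 (hFd.grid j hj).abs_sub_le).1
    have hsat : F p + 1 / 2 - ε ≤ min (F p + (1 / 2 - F 0)) 1 :=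
      le_min (by linarith [hF.map_zero, hFd.error_nonneg]) (by linarith)
    linarith
  have hGs : G (d.grid j) ≤ G p + 1 / 2 + ε := by
    linarith [(abs_le.1 (hGd.grid j hj).abs_sub_le).2, min_le_left (G p + (1 / 2 - G 0)) 1,
      hG.map_zero]
  rcases le_total d.mid (d.grid j) with hright | hleft
  · linarith [sub_le_of_mid_le hδ hF hG hFd hGd hR ⟨hright, hs.2⟩]
  · have hFs' : F (d.grid j) ≤ F d.mid :=
      hF.monotoneOn hδ.le (Icc_subset_Icc_left hp.1 hs) hFd.mid_mem hleft
    have hDη : 0 ≤ Δ / δ * η :=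
      mul_nonneg (zero_le_one.trans (hF.one_le_div hδ)) hR.pos.le
    linarith [(hG.mem_Icc hδ.le hp).1]

theorem sub_le (hδ : 0 < δ) (hF : IsCumulative δ Δ F) (hG : IsCumulative δ Δ G)
    (hFd : Consistent F η ε M n d) (hGd : Consistent G η ε M n d)
    (hR : IsResolution δ Δ η ε M n) (hx : x ∈ Icc (0 : ℝ) 1) :
    F x - G x ≤ 11 * (Δ / δ * η) := by
  have hDη : η ≤ Δ / δ * η := le_mul_of_one_le_left hR.pos.le (hF.one_le_div hδ)
  rcases le_or_gt d.mid x with hmid | hmid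
  · linarith [sub_le_of_mid_le hδ hF hG hFd hGd hR ⟨hmid, hx.2⟩, hR.pos]
  have hn : (0 : ℝ) < n := pos_of_mul_pos_left (zero_lt_one.trans_le hR.one_le_grid) hR.pos.le
  set j := ⌊x * n⌋₊
  have hjx : (j : ℝ) / n ≤ x :=
    (div_le_iff₀ hn).2 (Nat.floor_le (mul_nonneg hx.1 hn.le))
  have hj : j < n := by
    have h : (j : ℝ) < n := by
      simpa using (div_lt_iff₀ hn).1 (hjx.trans_lt (hmid.trans_le hFd.mid_mem.2))
    exact_mod_cast h
  have hxj : x - j / n ≤ η := by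
    have h : x ≤ (j + 1) / n := (le_div_iff₀ hn).2 (Nat.lt_floor_add_one _).le
    have hη : 1 / (n : ℝ) ≤ η := (div_le_iff₀' hn).2 hR.one_le_grid
    rw [add_div] at h
    linarith
  have hjmem : (j : ℝ) / n ∈ Icc (0 : ℝ) 1 := ⟨by positivity, hjx.trans hx.2⟩
  have hFx : F x - F (j / n) ≤ Δ / δ * η :=
    (hF.sub_le_mul hjmem hx hjx).trans (mul_le_mul (hF.upper_le_div hδ) hxj (sub_nonneg.2 hjx)
      (zero_le_one.trans (hF.one_le_div hδ)))
  linarith [grid_sub_grid_le hδ hF hG hFd hGd hR hj (hjx.trans hmid.le),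
    hG.monotoneOn hδ.le hjmem hx hjx, hR.error_le_half hF]

theorem abs_sub_le (hδ : 0 < δ) (hF : IsCumulative δ Δ F) (hG : IsCumulative δ Δ G)
    (hFd : Consistent F η ε M n d) (hGd : Consistent G η ε M n d)
    (hR : IsResolution δ Δ η ε M n) (hx : x ∈ Icc (0 : ℝ) 1) :
    |F x - G x| ≤ 11 * (Δ / δ * η) :=
  abs_sub_le_iff.2 ⟨sub_le hδ hF hG hFd hGd hR hx, sub_le hδ hG hF hGd hFd hR hx⟩

end Consistent

end Identification

section Exploration

variable {δ Δ η ε a y s : ℝ} {k L M n : ℕ} {vB : ℝ → ℝ}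

/-- The cuts `a, y, s`, followed by cuts at `1`. If these are not in order, the value is junk. -/
def threeCuts (k : ℕ) (a y s : ℝ) : Cuts k :=
  let c : Fin k → ℝ := fun i =>
    if i.1 = 0 then a else if i.1 = 1 then y else if i.1 = 2 then s else 1
  if h : ValidCuts k c then ⟨c, h⟩ else default

theorem extCuts_threeCuts (hk : 3 ≤ k) (ha : 0 ≤ a) (hay : a ≤ y) (hys : y ≤ s) (hs : s ≤ 1)
    (i : ℕ) : extCuts k (threeCuts k a y s) i =
      if i = 0 then 0 else if i = 1 then a else if i = 2 then y else if i = 3 then s else 1 := by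
  rw [threeCuts, dif_pos]
  · rcases i with _ | i
    · simp [extCuts]
    · rw [extCuts_succ]
      split_ifs <;> simp_all <;> omega
  · refine ⟨fun i j hij => ?_, fun i => ?_⟩
    · rw [Fin.le_def] at hij
      dsimp only
      split_ifs <;> first | omega | linarith
    · dsimp only
      split_ifs <;> constructor <;> linarith

theorem pieceVal_threeCuts_true (hB : IsValueDensity δ Δ vB) (hk : 3 ≤ k) (ha : 0 ≤ a)
    (hay : a ≤ y) (hys : y ≤ s) (hs : s ≤ 1) :
    pieceVal vB (altPiece k (threeCuts k a y s) true) =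
      cumVal vB a + (cumVal vB s - cumVal vB y) := by
  have hX := extCuts_threeCuts hk ha hay hys hs
  have hsub : ({0, 2} : Finset ℕ) ⊆ pieceIndices k true := by
    intro i hi
    rcases Finset.mem_insert.1 hi with rfl | hi
    · simp [pieceIndices]
    · simp [pieceIndices, Finset.mem_singleton.1 hi]
      omega
  have hzero : ∀ i ∈ pieceIndices k true, i ∉ ({0, 2} : Finset ℕ) →
      cumVal vB (extCuts k (threeCuts k a y s) (i + 1)) -
        cumVal vB (extCuts k (threeCuts k a y s) i) = 0 := by
    intro i hi hi'
    simp only [pieceIndices, Finset.mem_filter, decide_eq_true_eq, Finset.mem_insert,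
      Finset.mem_singleton, not_or] at hi hi'
    rw [hX, hX]
    split_ifs <;> first | omega | contradiction | exact sub_self _
  rw [pieceVal_altPiece hB (threeCuts k a y s).2, altSum, ← Finset.sum_subset hsub hzero,
    Finset.sum_pair (by norm_num)]
  simp [hX, hB.isCumulative.map_zero]

theorem BestReply.half_le_threeCuts (hB : IsValueDensity δ Δ vB) (hk : 3 ≤ k) (ha : 0 ≤ a)
    (hay : a ≤ y) (hys : y ≤ s) (hs : s ≤ 1) (h : BestReply vB (threeCuts k a y s) true) :
    1 / 2 ≤ cumVal vB a + (cumVal vB s - cumVal vB y) := by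
  rw [← pieceVal_threeCuts_true hB hk ha hay hys hs]
  exact (prefers_iff_half_le hB (threeCuts k a y s).2).1 h

theorem BestReply.threeCuts_le_half (hB : IsValueDensity δ Δ vB) (hk : 3 ≤ k) (ha : 0 ≤ a)
    (hay : a ≤ y) (hys : y ≤ s) (hs : s ≤ 1) (h : BestReply vB (threeCuts k a y s) false) :
    cumVal vB a + (cumVal vB s - cumVal vB y) ≤ 1 / 2 := by
  have hfalse := (prefers_iff_half_le hB (threeCuts k a y s).2).1 h
  have hsum := pieceVal_add_pieceVal_not hB (threeCuts k a y s).2 false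
  rw [Bool.not_false, pieceVal_threeCuts_true hB hk ha hay hys hs] at hsum
  linarith

/-- `L` steps of binary search in `[lo, hi]` for the point at which `[y, s]` completes `[0, a]` to
one half of the cake. -/
def binarySearch (k : ℕ) (a y : ℝ) : ℕ → ℝ → ℝ → QueryTree (Cuts k) ℝ
  | 0, lo, _ => pure lo
  | L + 1, lo, hi => .ask (threeCuts k a y ((lo + hi) / 2)) fun b =>
      bif b then binarySearch k a y L lo ((lo + hi) / 2)
      else binarySearch k a y L ((lo + hi) / 2) hi

theorem ensures_binarySearch (hδ : 0 ≤ δ) (hB : IsValueDensity δ Δ vB) (hk : 3 ≤ k)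
    (ha : 0 ≤ a) (hay : a ≤ y) (L : ℕ) {lo hi : ℝ} (hylo : y ≤ lo) (hlohi : lo ≤ hi) (hhi : hi ≤ 1)
    (hlo : cumVal vB lo ≤ min (cumVal vB y + (1 / 2 - cumVal vB a)) 1)
    (hhi' : min (cumVal vB y + (1 / 2 - cumVal vB a)) 1 ≤ cumVal vB hi)
    (hε : Δ * (hi - lo) ≤ 2 ^ L * ε) :
    (binarySearch k a y L lo hi).Ensures (BestReply vB) (CompletesHalf (cumVal vB) ε a y) L := by
  have hF := hB.isCumulative
  induction L generalizing lo hi with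
  | zero =>
    have hF' := hF.sub_le_mul ⟨by linarith, hlohi.trans hhi⟩ ⟨by linarith, hhi⟩ hlohi
    refine .ret ⟨⟨hylo, hlohi.trans hhi⟩, abs_le.2 ⟨?_, ?_⟩⟩ <;> linarith
  | succ L ih =>
    have hlomid : lo ≤ (lo + hi) / 2 := by linarith
    have hmidhi : (lo + hi) / 2 ≤ hi := by linarith
    have hmid : y ≤ (lo + hi) / 2 := hylo.trans hlomid
    rw [pow_succ] at hε
    refine .ask fun b hb => ?_
    cases b with
    | true =>
      have hlarge := hb.half_le_threeCuts hB hk ha hay hmid (hmidhi.trans hhi)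
      exact ih hylo hlomid (hmidhi.trans hhi) hlo ((min_le_left _ _).trans (by linarith))
        (by linarith)
    | false =>
      have hsmall := hb.threeCuts_le_half hB hk ha hay hmid (hmidhi.trans hhi)
      have hle := (hF.mem_Icc hδ ⟨by linarith, hmidhi.trans hhi⟩).2
      exact ih hmid hmidhi hhi (le_min (by linarith) hle) hhi' (by linarith)

/-- Searches for the point `s` at which `[y, s]` completes `[0, a]` to one half of the cake. -/
def search (k L : ℕ) (a y : ℝ) : QueryTree (Cuts k) ℝ := binarySearch k a y L y 1

theorem ensures_search (hδ : 0 ≤ δ) (hB : IsValueDensity δ Δ vB) (hk : 3 ≤ k) (ha : 0 ≤ a)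
    (hay : a ≤ y) (hy : y ≤ 1) (hhalf : cumVal vB a ≤ 1 / 2) (L : ℕ) :
    (search k L a y).Ensures (BestReply vB) (CompletesHalf (cumVal vB) (Δ / 2 ^ L) a y) L := by
  have hF := hB.isCumulative
  have hΔ : 0 ≤ Δ := zero_le_one.trans hF.one_le_upper
  have hy0 : 0 ≤ y := ha.trans hay
  refine ensures_binarySearch hδ hB hk ha hay L le_rfl hy le_rfl ?_ ?_ ?_
  · exact le_min (by linarith) (hF.mem_Icc hδ ⟨hy0, hy⟩).2
  · exact (min_le_right _ _).trans_eq hF.map_one.symm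
  · rw [mul_div_cancel₀ _ (by positivity)]
    exact mul_le_of_le_one_right hΔ (by linarith)

/-- Finds the midpoint, then marches to the right from it, then finds the partners of the grid
points. -/
def explore (k : ℕ) (η : ℝ) (L M n : ℕ) : QueryTree (Cuts k) Findings := do
  let mid ← search k L 0 0
  let march ← QueryTree.trajectory (search k L (mid - η)) mid M
  let grid ← QueryTree.tabulate (fun j => search k L 0 (j / n)) n
  pure ⟨mid, march, grid⟩

theorem ensures_explore (hδ : 0 < δ) (hB : IsValueDensity δ Δ vB) (hk : 3 ≤ k)
    (hR : IsResolution δ Δ η (Δ / 2 ^ L) M n) :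
    (explore k η L M n).Ensures (BestReply vB) (Consistent (cumVal vB) η (Δ / 2 ^ L) M n)
      (L + (M * L + n * L)) := by
  have hF := hB.isCumulative
  have hmid := ensures_search hδ.le hB hk le_rfl le_rfl zero_le_one
    (hF.map_zero.trans_le (by norm_num)) L
  refine hmid.bind fun mid hmid => ?_
  have hmid01 : mid ∈ Icc (0 : ℝ) 1 := hmid.mem
  have hleft : mid - η ≤ mid := sub_le_self _ hR.pos.le
  have hmarch := QueryTree.ensures_trajectory (f := search k L (mid - η))
    (I := (· ∈ Icc mid 1)) (a := mid) ⟨le_rfl, hmid01.2⟩ (fun y hy =>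
      (ensures_search hδ.le hB hk (sub_nonneg.2 (hR.le_mid hF hmid)) (hleft.trans hy.1) hy.2
        (hR.map_mid_sub_le_half hδ hF hmid) L).mono fun s hs =>
          ⟨⟨hy.1.trans hs.mem.1, hs.mem.2⟩, hs⟩) M
  have hgrid := QueryTree.ensures_tabulate (f := fun j => search k L 0 (j / n)) n fun j hj =>
    ensures_search hδ.le hB hk le_rfl (by positivity)
      (div_le_one_of_le₀ (by exact_mod_cast hj.le) n.cast_nonneg)
      (hF.map_zero.trans_le (by norm_num)) L
  exact hmarch.bind fun march hmarch => hgrid.map fun grid hgrid =>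
    ⟨hR.le_mid hF hmid, hmid, hmarch.1, hmarch.2.2, hgrid⟩

end Exploration

section Parameters

variable {δ Δ : ℝ}

theorem one_le_log {S : ℝ} (hS : 3 ≤ S) : 1 ≤ Real.log S := by
  rw [Real.le_log_iff_exp_le (by linarith)]
  linarith [Real.exp_one_lt_d9]

theorem exists_mul_le_two_pow {B : ℝ} (hB : 1 ≤ B) :
    ∃ K > 0, ∀ S : ℝ, 3 ≤ S → ∃ L : ℕ, B * S ≤ 2 ^ L ∧ L ≤ K * Real.log S := by
  have hlogB : 0 ≤ Real.log B := Real.log_nonneg hB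
  refine ⟨(Real.log B + 1) / Real.log 2 + 1, by positivity, fun S hS => ?_⟩
  have hBS : 0 < B * S := by positivity
  have hlogS := one_le_log hS
  have hlogBS : 0 ≤ Real.logb 2 (B * S) := Real.logb_nonneg one_lt_two (by nlinarith)
  refine ⟨⌈Real.logb 2 (B * S)⌉₊, ?_, ?_⟩
  · rw [← Real.rpow_natCast, ← Real.logb_le_iff_le_rpow one_lt_two hBS]
    exact Nat.le_ceil _
  · calc (⌈Real.logb 2 (B * S)⌉₊ : ℝ)
        ≤ Real.logb 2 (B * S) + 1 := (Nat.ceil_lt_add_one hlogBS).le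
      _ = (Real.log B + Real.log S) / Real.log 2 + 1 := by
        rw [Real.logb, Real.log_mul (by positivity) (by positivity)]
      _ ≤ (Real.log B * Real.log S + Real.log S) / Real.log 2 + Real.log S := by
        gcongr
        exact le_mul_of_one_le_right hlogB hlogS
      _ = ((Real.log B + 1) / Real.log 2 + 1) * Real.log S := by ring

theorem isResolution_of_le {q r L : ℕ} (hΔ : 1 ≤ Δ) (hq : 4 * Δ ≤ q) (hr : 1 ≤ r * δ)
    (hL : 2 * Δ * r * q ^ 2 ≤ 2 ^ L) :
    IsResolution δ Δ (1 / q) (Δ / 2 ^ L) (r * q) q := by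
  have hq0 : (0 : ℝ) < q := by linarith
  have hr0 : (1 : ℝ) ≤ r := by
    exact_mod_cast Nat.one_le_iff_ne_zero.2 (by rintro rfl; norm_num at hr)
  have hrq : (1 : ℝ) ≤ r * q := one_le_mul_of_one_le_of_one_le hr0 (by linarith)
  have herror : Δ / 2 ^ L ≤ 1 / (2 * r * q ^ 2) := by
    rw [div_le_div_iff₀ (by positivity) (by positivity)]
    linarith
  refine ⟨by positivity, ?_, herror.trans ?_, ?_, ?_, ?_⟩
  · rwa [mul_one_div, div_le_one hq0]
  · rw [div_le_iff₀ (by positivity)]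
    calc (1 : ℝ) ≤ r * δ * q := one_le_mul_of_one_le_of_one_le hr (by linarith)
      _ = δ * (1 / q) / 2 * (2 * r * q ^ 2) := by field_simp
  · push_cast
    calc (r * q + 1) * (Δ / 2 ^ L) ≤ (r * q + r * q) * (1 / (2 * r * q ^ 2)) := by gcongr
      _ = 1 / q := by field_simp; ring
  · push_cast
    rw [show (r : ℝ) * q * (δ * (1 / q)) = r * δ by field_simp]
    exact hr
  · rw [mul_one_div_cancel hq0.ne']

theorem exists_isResolution (hδ : 0 < δ) (hΔ : 1 ≤ Δ) :
    ∃ K > 0, ∀ S : ℝ, 3 ≤ S → ∃ (η : ℝ) (L M n : ℕ), IsResolution δ Δ η (Δ / 2 ^ L) M n ∧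
      η * √S ≤ 1 ∧ ((L + (M * L + n * L) : ℕ) : ℝ) ≤ K * (√S * Real.log S) := by
  set r := ⌈1 / δ⌉₊
  have hr0 : 1 ≤ r := Nat.one_le_ceil_iff.2 (by positivity)
  have hr0' : (1 : ℝ) ≤ r := by exact_mod_cast hr0
  have hr : 1 ≤ r * δ := (div_le_iff₀ hδ).1 (Nat.le_ceil _)
  obtain ⟨K, hK, hL⟩ := exists_mul_le_two_pow (B := 2 * Δ * r * (5 * Δ) ^ 2)
    (one_le_mul_of_one_le_of_one_le (one_le_mul_of_one_le_of_one_le (by linarith) hr0')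
      (one_le_pow₀ (by linarith)))
  refine ⟨K * (1 + (r + 1) * (5 * Δ)), by positivity, fun S hS => ?_⟩
  have hS1 : 1 ≤ √S := Real.one_le_sqrt.2 (by linarith)
  obtain ⟨L, hBS, hLS⟩ := hL S hS
  set q := ⌈4 * Δ * √S⌉₊
  have hSΔ : √S ≤ Δ * √S := le_mul_of_one_le_left (by linarith) hΔ
  have hq₁ : 4 * Δ * √S ≤ q := Nat.le_ceil _
  have hq₂ : q ≤ 5 * Δ * √S := by
    linarith [Nat.ceil_lt_add_one (a := 4 * Δ * √S) (by positivity)]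
  have hqΔ : 4 * Δ ≤ q := (le_mul_of_one_le_right (by positivity) hS1).trans hq₁
  have hq0 : (0 : ℝ) < q := by linarith
  refine ⟨1 / q, L, r * q, q, isResolution_of_le hΔ hqΔ hr (le_trans ?_ hBS), ?_, ?_⟩
  · calc 2 * Δ * r * q ^ 2 ≤ 2 * Δ * r * (5 * Δ * √S) ^ 2 := by gcongr
      _ = 2 * Δ * r * (5 * Δ) ^ 2 * S := by
        rw [mul_pow _ √S, Real.sq_sqrt (by linarith), ← mul_assoc]
  · rw [one_div_mul_eq_div, div_le_one hq0]
    linarith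
  · have hL0 : (0 : ℝ) ≤ L := L.cast_nonneg
    push_cast
    calc (L + (r * q * L + q * L) : ℝ) = L * (1 + (r + 1) * q) := by ring
      _ ≤ K * Real.log S * (√S + (r + 1) * (5 * Δ * √S)) := by
        gcongr
        exact hL0.trans hLS
      _ = K * (1 + (r + 1) * (5 * Δ)) * (√S * Real.log S) := by ring

end Parameters

section RegretBound

variable {δ Δ η ε : ℝ} {k L M n : ℕ} {vA : ℝ → ℝ}

/-- Any density consistent with the findings approximates all the others, hence determines good
cuts. -/
theorem exists_cuts_of_findings (hδ : 0 < δ) (hA : IsValueDensity δ Δ vA) (hk : 1 ≤ k)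
    (hR : IsResolution δ Δ η ε M n) (d : Findings) :
    ∃ c : Cuts k, ∀ vB, IsValueDensity δ Δ vB → Consistent (cumVal vB) η ε M n d →
      ∀ b, BestReply vB c b → stackelbergValue k vA vB - pieceVal vA (altPiece k c (!b)) ≤
        88 * (Δ / δ) ^ 2 * ((k + 1) * η) := by
  by_cases hw : ∃ w, IsValueDensity δ Δ w ∧ Consistent (cumVal w) η ε M n d
  · obtain ⟨w, hw, hwd⟩ := hw
    have hD : 0 < Δ / δ := zero_lt_one.trans_le (hA.isCumulative.one_le_div hδ)
    have hη := hR.pos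
    obtain ⟨c, hc, hgood⟩ := exists_robust_cuts (ρ := (k + 1) * (2 * (11 * (Δ / δ * η)))) hδ hA hw
      hk (by positivity)
    refine ⟨⟨c, hc⟩, fun vB hB hBd b hb => (hgood vB hB (fun c b hc => ?_) b hb).trans_eq (by ring)⟩
    exact abs_pieceVal_sub_le hB hw
      (fun x hx => Consistent.abs_sub_le hδ hB.isCumulative hw.isCumulative hBd hwd hR hx) hc b
  · exact ⟨default, fun vB hB hBd => absurd ⟨vB, hB, hBd⟩ hw⟩

theorem exists_learning_tree (hδ : 0 < δ) (hA : IsValueDensity δ Δ vA) (hk : 3 ≤ k)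
    (hR : IsResolution δ Δ η (Δ / 2 ^ L) M n) :
    ∃ tree : QueryTree (Cuts k) (Cuts k), ∀ vB, IsValueDensity δ Δ vB →
      tree.Ensures (BestReply vB) (fun c => ∀ b, BestReply vB c b →
        stackelbergValue k vA vB - pieceVal vA (altPiece k c (!b)) ≤
          88 * (Δ / δ) ^ 2 * ((k + 1) * η)) (L + (M * L + n * L)) := by
  choose cuts hcuts using fun d => exists_cuts_of_findings hδ hA (by omega : 1 ≤ k) hR d
  exact ⟨explore k η L M n >>= fun d => pure (cuts d), fun vB hB =>
    (ensures_explore hδ hB hk hR).map fun d hd => hcuts d vB hB hd⟩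

theorem mul_mul_add_one_mul_le_sqrt {A : ℝ} {T : ℕ} (hA : 0 ≤ A) (hη : 0 ≤ η) (hk : 1 ≤ k)
    (hηT : η * √(T * k) ≤ 1) : T * (A * ((k + 1) * η)) ≤ 2 * A * √(T * k) := by
  have hk' : (1 : ℝ) ≤ k := by exact_mod_cast hk
  calc T * (A * ((k + 1) * η)) ≤ T * (A * ((k + k) * η)) := by gcongr
    _ = 2 * A * (√(T * k) * √(T * k)) * η := by rw [Real.mul_self_sqrt (by positivity)]; ring
    _ = 2 * A * √(T * k) * (η * √(T * k)) := by ring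
    _ ≤ 2 * A * √(T * k) := mul_le_of_le_one_right (by positivity) hηT

theorem k_cut_myopic_upper_general (δ Δ : ℝ) (hδ : 0 < δ) :
    ∃ C : ℝ, 0 < C ∧ ∀ k : ℕ, 3 ≤ k → ∀ vA : ℝ → ℝ, IsValueDensity δ Δ vA →
      ∃ SA : AliceStrategy k, AliceValid k SA ∧ ∀ vB : ℝ → ℝ, IsValueDensity δ Δ vB →
        ∀ SB : BobStrategy k, IsMyopic k vB SB → ∀ T : ℕ, 1 ≤ T →
          aliceRegret k vA vB SA SB T ≤ C * √((T : ℝ) * k) * Real.log ((T : ℝ) * k) := by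
  rcases lt_or_ge Δ 1 with hΔ | hΔ
  · exact ⟨1, one_pos, fun k _ vA hA => absurd hA.isCumulative.one_le_upper hΔ.not_ge⟩
  obtain ⟨K, hK, hparameters⟩ := exists_isResolution hδ hΔ
  refine ⟨K + 2 * (88 * (Δ / δ) ^ 2), by positivity, fun k hk vA hA => ?_⟩
  have hS : ∀ T : ℕ, 1 ≤ T → (3 : ℝ) ≤ T * k := fun T hT => by
    exact_mod_cast hk.trans (Nat.le_mul_of_pos_left k hT)
  choose! η L M n hR hη hcount using fun (T : ℕ) (hT : 1 ≤ T) => hparameters _ (hS T hT)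
  choose! tree htree using fun (T : ℕ) (hT : 1 ≤ T) => exists_learning_tree hδ hA hk (hR T hT)
  refine ⟨treeStrategy tree, aliceValid_treeStrategy tree, fun vB hB SB hSB T hT => ?_⟩
  have hη0 := (hR T hT).pos.le
  calc aliceRegret k vA vB (treeStrategy tree) SB T
      ≤ _ := aliceRegret_treeStrategy_le hδ.le hA hB (by positivity) hSB tree (htree T hT vB hB)
    _ ≤ K * (√(T * k) * Real.log (T * k)) + 2 * (88 * (Δ / δ) ^ 2) * √(T * k) :=
      add_le_add (hcount T hT)
        (mul_mul_add_one_mul_le_sqrt (by positivity) hη0 (by omega) (hη T hT))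
    _ ≤ K * (√(T * k) * Real.log (T * k)) +
          2 * (88 * (Δ / δ) ^ 2) * (√(T * k) * Real.log (T * k)) := by
      gcongr
      exact le_mul_of_one_le_right (Real.sqrt_nonneg _) (one_le_log (hS T hT))
    _ = (K + 2 * (88 * (Δ / δ) ^ 2)) * √(T * k) * Real.log (T * k) := by ring

end RegretBound

/-- `k ≥ 3` cuts, myopic Bob, upper bound: for all `0 < δ ≤ Δ` there is
`C > 0` such that for every `k ≥ 3` and every Alice value density there is a deterministic
Alice strategy whose Stackelberg regret against the myopic Bob is at most
`C·√(T·k)·log(T·k)` for every Bob value density and every horizon `T ≥ 2`. -/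
theorem k_cut_myopic_upper (δ Δ : ℝ) (hδ : 0 < δ) (hδΔ : δ ≤ Δ) :
    ∃ C : ℝ, 0 < C ∧
      ∀ k : ℕ, 3 ≤ k →
        ∀ vA : ℝ → ℝ, IsValueDensity δ Δ vA →
          ∃ SA : AliceStrategy k, AliceValid k SA ∧
            ∀ vB : ℝ → ℝ, IsValueDensity δ Δ vB →
              ∀ T : ℕ, 2 ≤ T →
                aliceRegret k vA vB SA (myopicBob k vA vB) T ≤
                  C * Real.sqrt ((T : ℝ) * k) * Real.log ((T : ℝ) * k) := by
  obtain ⟨C, hC, h⟩ := k_cut_myopic_upper_general δ Δ hδ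
  refine ⟨C, hC, fun k hk vA hA => (h k hk vA hA).imp fun SA hSA => ⟨hSA.1, fun vB hB T hT => ?_⟩⟩
  exact hSA.2 vB hB _ (isMyopic_myopicBob k vA vB) T (one_le_two.trans hT)

end
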